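/- arXiv:1902.09880 — 3 statements merged into one kernel-verified Lean document; each statement's English description precedes it below -/
import Mathlib

section
/- Let L1 = (S1, ι1, →1) and L2 = (S2, ι2, →2) be two LTSs. Then L1 ⊑sfr L2 (i.e., failures(L2) ⊆ failures(L1) and weaktraces(L2) ⊆ weaktraces(L1)) holds if and only if no SF-witness is reachable in the product norm(L1) ⋉ L2, where a product state (U, s) is an SF-witness iff U = ∅, or s is stable and refusals(s) ⊄ refusals(U). -/
/-- A labelled transition system with states `S` and visible actions `Act`.
Transition labels are `Option Act`, where `none` plays the role of the
internal action τ and `some a` is the visible action `a ∈ Act`. -/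
structure LTS (S : Type*) (Act : Type*) where
  init : S
  tr : S → Option Act → S → Prop

namespace LTS

variable {S S₁ S₂ : Type*} {Act : Type*}

/-- The trace relation: `s ⟶ε t` iff `s = t`, and `s ⟶(σ a) t` iff
`s ⟶σ u` and `u —a→ t` for some `u`. -/
inductive Trace (L : LTS S Act) : S → List (Option Act) → S → Prop
  | nil (s : S) : Trace L s [] s
  | snoc {s u t : S} {σ : List (Option Act)} {a : Option Act} :
      Trace L s σ u → L.tr u a t → Trace L s (σ ++ [a]) t

/-- The weak transition relation `s ⇒ρ t` for `ρ ∈ Act*`. -/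
inductive Weak (L : LTS S Act) : S → List Act → S → Prop
  | refl (s : S) : Weak L s [] s
  | tau {s t : S} : L.tr s none t → Weak L s [] t
  | act {s t : S} {a : Act} : L.tr s (some a) t → Weak L s [a] t
  | comp {s u t : S} {ρ σ : List Act} :
      Weak L s ρ u → Weak L u σ t → Weak L s (ρ ++ σ) t

/-- A state is reachable iff some trace leads from the initial state to it. -/
def Reachable (L : LTS S Act) (s : S) : Prop := ∃ σ, L.Trace L.init σ s

/-- A state is stable iff it has no outgoing τ-transition. -/
def Stable (L : LTS S Act) (s : S) : Prop := ¬ ∃ t, L.tr s none t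

/-- A state diverges iff there is an infinite sequence of τ-transitions from it. -/
def Diverges (L : LTS S Act) (s : S) : Prop :=
  ∃ f : ℕ → S, f 0 = s ∧ ∀ n, L.tr (f n) none (f (n + 1))

/-- The weak traces of an LTS. -/
def weaktraces (L : LTS S Act) : Set (List Act) := {ρ | ∃ t, L.Weak L.init ρ t}

/-- The divergences of an LTS: all `ρ σ` such that `ι ⇒ρ t` for a diverging `t`. -/
def divergences (L : LTS S Act) : Set (List Act) :=
  {w | ∃ ρ σ : List Act, w = ρ ++ σ ∧ ∃ t, L.Weak L.init ρ t ∧ L.Diverges t}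

/-- The refusals of a (stable) state: all sets `X` of visible actions none of
which is enabled in `s`. -/
def refusals (L : LTS S Act) (s : S) : Set (Set Act) :=
  {X | ∀ a ∈ X, ¬ ∃ t, L.tr s (some a) t}

/-- The refusals of a set of states. -/
def refusalsSet (L : LTS S Act) (U : Set S) : Set (Set Act) :=
  {X | ∃ s ∈ U, L.Stable s ∧ X ∈ L.refusals s}

/-- The stable failures of an LTS. -/
def failures (L : LTS S Act) : Set (List Act × Set Act) :=
  {p | ∃ t, L.Weak L.init p.1 t ∧ L.Stable t ∧ p.2 ∈ L.refusals t}

/-- The failures with post-divergence details obscured. -/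
def failuresBot (L : LTS S Act) : Set (List Act × Set Act) :=
  L.failures ∪ {p | p.1 ∈ L.divergences}

/-- The normal form of an LTS. -/
def norm (L : LTS S Act) : LTS (Set S) Act where
  init := {s | L.Weak L.init [] s}
  tr U a V := ∃ b : Act, a = some b ∧ V = {t | ∃ s ∈ U, L.Weak s [b] t}

/-- The failures-divergences normal form of an LTS. -/
def normFdr (L : LTS S Act) : LTS (Set S) Act where
  init := {s | L.Weak L.init [] s}
  tr U a V := ∃ b : Act, a = some b ∧ (¬ ∃ s ∈ U, L.Diverges s) ∧
      V = {t | ∃ s ∈ U, L.Weak s [b] t}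

/-- The product of two LTSs. -/
def prod (L₁ : LTS S₁ Act) (L₂ : LTS S₂ Act) : LTS (S₁ × S₂) Act where
  init := (L₁.init, L₂.init)
  tr p a q :=
    (a = none ∧ q.1 = p.1 ∧ L₂.tr p.2 none q.2) ∨
    (∃ b : Act, a = some b ∧ L₁.tr p.1 (some b) q.1 ∧ L₂.tr p.2 (some b) q.2)

end LTS


/-- An SF-witness: `U = ∅`, or `s` is stable and some refusal of `s` is not a
refusal of the set of states `U`. -/
def SFwitness {S₁ S₂ Act : Type*} (L₁ : LTS S₁ Act) (L₂ : LTS S₂ Act)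
    (p : Set S₁ × S₂) : Prop :=
  p.1 = ∅ ∨ (L₂.Stable p.2 ∧ ¬ L₂.refusals p.2 ⊆ L₁.refusalsSet p.1)

theorem LTS.Weak.split {S Act : Type*} {L : LTS S Act} {s t : S} {ρ : List Act}
    (h : L.Weak s ρ t) : ∀ ρ₁ ρ₂, ρ = ρ₁ ++ ρ₂ → ∃ u, L.Weak s ρ₁ u ∧ L.Weak u ρ₂ t := by
  induction h with
  | refl s =>
    intro ρ₁ ρ₂ h
    obtain ⟨rfl, rfl⟩ := List.append_eq_nil_iff.1 h.symm
    exact ⟨s, .refl s, .refl s⟩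
  | @tau s t htr =>
    intro ρ₁ ρ₂ h
    obtain ⟨rfl, rfl⟩ := List.append_eq_nil_iff.1 h.symm
    exact ⟨s, .refl s, .tau htr⟩
  | @act s t a htr =>
    intro ρ₁ ρ₂ h
    rcases List.append_eq_singleton_iff.1 h.symm with ⟨rfl, rfl⟩ | ⟨rfl, rfl⟩
    · exact ⟨s, .refl s, .act htr⟩
    · exact ⟨t, .act htr, .refl t⟩
  | @comp s u t ρ σ h₁ h₂ ih₁ ih₂ =>
    intro ρ₁ ρ₂ h
    rcases List.append_eq_append_iff.1 h with ⟨m, rfl, rfl⟩ | ⟨m, rfl, rfl⟩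
    · obtain ⟨v, hv₁, hv₂⟩ := ih₂ m ρ₂ rfl
      exact ⟨v, .comp h₁ hv₁, hv₂⟩
    · obtain ⟨v, hv₁, hv₂⟩ := ih₁ ρ₁ m rfl
      exact ⟨v, hv₁, .comp hv₂ h₂⟩

theorem LTS.after_snoc {S Act : Type*} (L : LTS S Act) (ρ : List Act) (b : Act) :
    {t | L.Weak L.init (ρ ++ [b]) t} =
      {t | ∃ s ∈ {t | L.Weak L.init ρ t}, L.Weak s [b] t} := by
  ext t
  constructor
  · intro h
    exact h.split ρ [b] rfl
  · rintro ⟨s, hs, h⟩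
    exact .comp hs h

theorem LTS.reach_of_weak {S₁ S₂ Act : Type*} (L₁ : LTS S₁ Act) (L₂ : LTS S₂ Act)
    {s t : S₂} {ρ : List Act} (h : L₂.Weak s ρ t) :
    ∀ σ, ((L₁.norm).prod L₂).Reachable ({x | L₁.Weak L₁.init σ x}, s) →
      ((L₁.norm).prod L₂).Reachable ({x | L₁.Weak L₁.init (σ ++ ρ) x}, t) := by
  induction h with
  | refl s => intro σ h; simpa using h
  | tau htr =>
    rintro σ ⟨w, hw⟩
    rw [List.append_nil]
    exact ⟨_, .snoc hw (Or.inl ⟨rfl, rfl, htr⟩)⟩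
  | @act s t a htr =>
    rintro σ ⟨w, hw⟩
    exact ⟨_, .snoc hw (Or.inr ⟨a, rfl, ⟨a, rfl, L₁.after_snoc σ a⟩, htr⟩)⟩
  | comp _ _ ih₁ ih₂ =>
    intro σ h
    rw [← List.append_assoc]
    exact ih₂ _ (ih₁ _ h)

theorem LTS.weak_of_trace {S₁ S₂ Act : Type*} (L₁ : LTS S₁ Act) (L₂ : LTS S₂ Act)
    {p q : Set S₁ × S₂} {w : List (Option Act)} (h : ((L₁.norm).prod L₂).Trace p w q) :
    p = ((L₁.norm).prod L₂).init →
      ∃ ρ, L₂.Weak L₂.init ρ q.2 ∧ q.1 = {x | L₁.Weak L₁.init ρ x} := by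
  induction h with
  | nil => rintro rfl; exact ⟨[], .refl _, rfl⟩
  | snoc _ htr ih =>
    intro hp
    obtain ⟨ρ, h₁, h₂⟩ := ih hp
    rcases htr with ⟨-, he, ht⟩ | ⟨b, -, ⟨c, hc, hV⟩, ht⟩
    · refine ⟨ρ, ?_, he.trans h₂⟩
      have := LTS.Weak.comp h₁ (.tau ht)
      rwa [List.append_nil] at this
    · cases hc
      refine ⟨ρ ++ [b], .comp h₁ (.act ht), ?_⟩
      rw [hV, h₂, L₁.after_snoc]

/-- stable failures refinement holds iff no SF-witness is
reachable in the product of the normal form of the specification and the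
implementation. -/
theorem stable_failures_refinement_iff {S₁ S₂ Act : Type*}
    (L₁ : LTS S₁ Act) (L₂ : LTS S₂ Act) :
    (L₂.failures ⊆ L₁.failures ∧ L₂.weaktraces ⊆ L₁.weaktraces) ↔
      ¬ ∃ p : Set S₁ × S₂, ((L₁.norm).prod L₂).Reachable p ∧ SFwitness L₁ L₂ p := by
  constructor
  · rintro ⟨hF, hT⟩ ⟨⟨U, s⟩, ⟨w, hw⟩, hwit⟩
    obtain ⟨ρ, h₁, h₂⟩ := LTS.weak_of_trace L₁ L₂ hw rfl
    dsimp only at h₁ h₂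
    subst h₂
    rcases hwit with he | ⟨hs, hr⟩
    · obtain ⟨t, ht⟩ := hT ⟨s, h₁⟩
      exact Set.notMem_empty t (he ▸ ht)
    · apply hr
      intro X hX
      have hm : (ρ, X) ∈ L₂.failures := ⟨s, h₁, hs, hX⟩
      exact hF hm
  · intro hno
    have key : ∀ ρ s, L₂.Weak L₂.init ρ s →
        ((L₁.norm).prod L₂).Reachable ({x | L₁.Weak L₁.init ρ x}, s) := fun ρ s h =>
      LTS.reach_of_weak L₁ L₂ h [] ⟨[], .nil _⟩
    constructor
    · rintro ⟨ρ, X⟩ ⟨t, ht, hst, hX⟩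
      by_contra hc
      exact hno ⟨_, key ρ t ht, Or.inr ⟨hst, fun hsub => hc (hsub hX)⟩⟩
    · rintro ρ ⟨t, ht⟩
      by_contra hc
      refine hno ⟨_, key ρ t ht, Or.inl ?_⟩
      ext x
      exact ⟨fun hx => hc ⟨x, hx⟩, fun hx => hx.elim⟩
end

section
/- Let L = (S, ι, →) be an LTS and let norm_fdr(L) = (S', ι', →') be its failures-divergences normal form. For all sequences ρ ∈ Act* such that either ρ ∉ divergences(L) or ρ is a minimal divergence of L, and for all states s ∈ S with ι ⇒ρ s, there is a state U ∈ S' such that s ∈ U and ι' ⟶ρ U in norm_fdr(L). -/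
theorem LTS.Weak.split_aux {S Act : Type*} {L : LTS S Act} {s t : S} {w : List Act}
    (h : L.Weak s w t) :
    ∀ ρ σ : List Act, w = ρ ++ σ → ∃ u, L.Weak s ρ u ∧ L.Weak u σ t := by
  induction h with
  | refl s =>
    intro ρ σ h
    obtain ⟨rfl, rfl⟩ := List.append_eq_nil_iff.1 h.symm
    exact ⟨s, .refl s, .refl s⟩
  | @tau s t ht =>
    intro ρ σ h
    obtain ⟨rfl, rfl⟩ := List.append_eq_nil_iff.1 h.symm
    exact ⟨s, .refl s, .tau ht⟩
  | @act s t a ht =>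
    intro ρ σ h
    rcases List.append_eq_singleton_iff.1 h.symm with ⟨rfl, rfl⟩ | ⟨rfl, rfl⟩
    · exact ⟨s, .refl s, .act ht⟩
    · exact ⟨t, .act ht, .refl t⟩
  | @comp s u t ρ₁ σ₁ h₁ h₂ ih₁ ih₂ =>
    intro ρ σ h
    rcases List.append_eq_append_iff.1 h with ⟨m, rfl, rfl⟩ | ⟨m, rfl, rfl⟩
    · obtain ⟨v, hv, hv'⟩ := ih₂ m σ rfl
      exact ⟨v, .comp h₁ hv, hv'⟩
    · obtain ⟨v, hv, hv'⟩ := ih₁ ρ m rfl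
      exact ⟨v, hv, .comp hv' h₂⟩

theorem LTS.normFdr_trace_aux {S Act : Type*} (L : LTS S Act) (ρ : List Act) :
    (∀ ρ' : List Act, ρ' <+: ρ → ρ' ≠ ρ → ρ' ∉ L.divergences) →
      (L.normFdr).Trace (L.normFdr).init (ρ.map some) {t | L.Weak L.init ρ t} := by
  induction ρ using List.reverseRecOn with
  | nil => intro _; exact .nil _
  | append_singleton ρ a ih =>
    intro h
    rw [List.map_append]
    refine .snoc (ih fun ρ' hp _ => h ρ' (hp.trans (List.prefix_append _ _)) ?_) ?_
    · rintro rfl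
      have := hp.length_le
      simp at this
    · refine ⟨a, rfl, ?_, ?_⟩
      · rintro ⟨s, hs, hd⟩
        exact h ρ (List.prefix_append _ _) (by simp) ⟨ρ, [], by simp, s, hs, hd⟩
      · ext t
        constructor
        · intro ht
          exact ht.split_aux ρ [a] rfl
        · rintro ⟨s, hs, ht⟩
          exact .comp hs ht

/-- for sequences `ρ` that are not divergences, or are minimal
divergences, every state reached via `ρ` is contained in a state of the
failures-divergences normal form reachable via `ρ`. -/
theorem normFdr_trace_exists {S Act : Type*} (L : LTS S Act) :
    ∀ ρ : List Act,
      (ρ ∉ L.divergences ∨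
        (ρ ∈ L.divergences ∧ ∀ ρ' : List Act, ρ' <+: ρ → ρ' ≠ ρ → ρ' ∉ L.divergences)) →
      ∀ s : S, L.Weak L.init ρ s →
        ∃ U : Set S, s ∈ U ∧ (L.normFdr).Trace (L.normFdr).init (ρ.map some) U := by
  intro ρ hρ s hs
  refine ⟨{t | L.Weak L.init ρ t}, hs, L.normFdr_trace_aux ρ ?_⟩
  rcases hρ with h | ⟨_, h⟩
  · rintro ρ' ⟨τ, rfl⟩ _ ⟨ρ₁, σ, rfl, t, ht⟩
    exact h ⟨ρ₁, σ ++ τ, by simp, t, ht⟩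
  · exact h
end

section
/- Let L = (S, ι, →) be an LTS and let norm_fdr(L) = (S', ι', →') be its failures-divergences normal form. For all sequences ρ ∈ Act*, it holds that ρ ∉ (divergences(L) ∪ weaktraces(L)) if and only if ι' ⟶ρ ∅ in norm_fdr(L). -/
theorem LTS.weak_split {S Act : Type*} (L : LTS S Act) {s t : S} {w : List Act}
    (h : L.Weak s w t) : ∀ ρ σ : List Act, w = ρ ++ σ →
      ∃ u, L.Weak s ρ u ∧ L.Weak u σ t := by
  induction h with
  | refl s =>
    intro ρ σ h
    obtain ⟨rfl, rfl⟩ := List.append_eq_nil_iff.1 h.symm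
    exact ⟨s, .refl s, .refl s⟩
  | @tau s t h1 =>
    intro ρ σ h
    obtain ⟨rfl, rfl⟩ := List.append_eq_nil_iff.1 h.symm
    exact ⟨s, .refl s, .tau h1⟩
  | @act s t a h1 =>
    intro ρ σ h
    rcases List.append_eq_singleton_iff.1 h.symm with ⟨rfl, rfl⟩ | ⟨rfl, rfl⟩
    · exact ⟨s, .refl s, .act h1⟩
    · exact ⟨t, .act h1, .refl t⟩
  | comp h1 h2 ih1 ih2 =>
    intro ρ σ h
    rcases List.append_eq_append_iff.1 h with ⟨c, rfl, h4⟩ | ⟨c, h3, rfl⟩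
    · obtain ⟨u, hu1, hu2⟩ := ih2 _ _ h4
      exact ⟨u, .comp h1 hu1, hu2⟩
    · obtain ⟨u, hu1, hu2⟩ := ih1 _ _ h3
      exact ⟨u, hu1, .comp hu2 h2⟩

theorem LTS.trace_snoc {S Act : Type*} (L : LTS S Act) {s t : S} {w : List (Option Act)}
    {a : Option Act} (h : L.Trace s (w ++ [a]) t) : ∃ u, L.Trace s w u ∧ L.tr u a t := by
  generalize hv : w ++ [a] = v at h
  cases h with
  | nil => simp at hv
  | snoc h1 h2 =>
    obtain ⟨rfl, h⟩ := List.append_inj' hv rfl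
    cases h
    exact ⟨_, h1, h2⟩

theorem LTS.normFdr_trace_iff {S Act : Type*} (L : LTS S Act) (ρ : List Act) :
    ∀ U : Set S, L.normFdr.Trace L.normFdr.init (ρ.map some) U ↔
      U = {t | L.Weak L.init ρ t} ∧
      ∀ ρ₁ σ : List Act, ρ = ρ₁ ++ σ → σ ≠ [] → ¬ ∃ t, L.Weak L.init ρ₁ t ∧ L.Diverges t := by
  induction ρ using List.reverseRecOn with
  | nil =>
    intro U
    constructor
    · intro h
      refine ⟨?_, fun ρ₁ σ h1 h2 => absurd (List.append_eq_nil_iff.1 h1.symm).2 h2⟩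
      generalize hv : List.map some ([] : List Act) = v at h
      cases h with
      | nil => rfl
      | snoc h1 h2 => simp at hv
    · rintro ⟨rfl, -⟩
      exact .nil _
  | append_singleton ρ a ih =>
    have key : {t | ∃ s ∈ {t | L.Weak L.init ρ t}, L.Weak s [a] t}
        = {t | L.Weak L.init (ρ ++ [a]) t} := by
      ext t
      constructor
      · rintro ⟨s, h1, h2⟩
        exact .comp h1 h2
      · intro h
        exact L.weak_split h _ _ rfl
    intro U
    rw [List.map_append]
    constructor
    · intro h
      obtain ⟨V, h1, b, hb, h2, rfl⟩ := L.normFdr.trace_snoc h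
      cases hb
      obtain ⟨rfl, h3⟩ := (ih V).1 h1
      refine ⟨key, ?_⟩
      intro ρ₁ σ h4 h5
      rcases List.eq_nil_or_concat σ with rfl | ⟨σ', c, rfl⟩
      · exact absurd rfl h5
      · rw [List.concat_eq_append, ← List.append_assoc] at h4
        obtain ⟨h6, -⟩ := List.append_inj' h4 rfl
        by_cases h7 : σ' = []
        · subst h7
          rw [List.append_nil] at h6
          subst h6
          exact h2
        · exact h3 _ _ h6 h7
    · rintro ⟨rfl, h⟩
      refine .snoc ((ih _).2 ⟨rfl, ?_⟩) ⟨a, rfl, h ρ [a] rfl (by simp), key.symm⟩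
      intro ρ₁ σ h1 h2
      exact h ρ₁ (σ ++ [a]) (by rw [h1, List.append_assoc]) (by simp)

/-- `ρ` is neither a divergence nor a weak trace of `L` iff `ρ`
leads to the empty set in the failures-divergences normal form of `L`. -/
theorem normFdr_trace_empty_iff {S Act : Type*} (L : LTS S Act) :
    ∀ ρ : List Act,
      ρ ∉ (L.divergences ∪ L.weaktraces) ↔
        (L.normFdr).Trace (L.normFdr).init (ρ.map some) (∅ : Set S) := by
  intro ρ
  rw [L.normFdr_trace_iff]
  constructor
  · intro h
    refine ⟨?_, fun ρ₁ σ h1 _ h2 => h (Or.inl ⟨ρ₁, σ, h1, h2⟩)⟩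
    ext t
    exact ⟨fun h1 => h1.elim, fun h1 => h (Or.inr ⟨t, h1⟩)⟩
  · rintro ⟨h1, h2⟩ h
    have h3 : ∀ t, ¬ L.Weak L.init ρ t := by
      intro t ht
      have h4 : t ∈ (∅ : Set S) := by
        rw [h1]
        exact ht
      exact h4
    rcases h with ⟨ρ₁, σ, h4, t, h5, h6⟩ | ⟨t, ht⟩
    · by_cases h7 : σ = []
      · subst h7
        rw [List.append_nil] at h4
        subst h4
        exact h3 t h5
      · exact h2 _ _ h4 h7 ⟨t, h5, h6⟩
    · exact h3 t ht
end
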